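/- Let X be a measurable space, let μ be a measure on X, let (ν_j)_{j∈ℕ} be measures on X with ν_j ≤ μ for all j, and let f_j, f : X → ℝ ∪ {−∞} be measurable functions. Assume: (i) for every k > 0, lim_{j→∞} ∫_X |max(f_j, −k) − max(f, −k)| dμ = 0; (ii) lim_{k→∞} sup_{j∈ℕ} μ({f_j < −k}) = 0 and lim_{k→∞} μ({f < −k}) = 0. Then for every δ > 0, lim_{j→∞} ν_j({f_j < f − δ}) = 0. -/

import Mathlib

open MeasureTheory Filter

/-!
At a point where `f_j < f - δ`, either `f_j < -k`, or truncating at `-k` leaves `f_j` unchanged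
and can only raise `f`, so the two truncations differ by more than `δ`. The first set is small by
the tail bound; for fixed `k` the second one is small because `L¹` convergence of the truncations
implies convergence in measure.
-/

/-- The truncation `max (a, -k)` of an extended real `a` from below, as a real number. The value
at `a = ⊤` is the junk value `0` of `EReal.toReal`. -/
noncomputable def truncBelow (k : ℝ) (a : EReal) : ℝ :=
  (max a ((-k : ℝ) : EReal)).toReal

section Truncation

variable {a b : EReal} {δ k : ℝ}

theorem measurable_truncBelow (k : ℝ) : Measurable (truncBelow k) :=
  (measurable_id.max measurable_const).ereal_toReal

theorem coe_truncBelow (ha : a ≠ ⊤) : (truncBelow k a : EReal) = max a ((-k : ℝ) : EReal) :=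
  EReal.coe_toReal (max_lt ha.lt_top (EReal.coe_lt_top _)).ne
    (lt_max_of_lt_right (EReal.bot_lt_coe _)).ne'

theorem lt_truncBelow_sub_truncBelow (hb : b ≠ ⊤) (hka : ((-k : ℝ) : EReal) ≤ a)
    (hab : a < b - δ) : δ < truncBelow k b - truncBelow k a := by
  have ha : a ≠ ⊤ := hab.ne_top
  have hlt : (truncBelow k a : EReal) < truncBelow k b - δ :=
    calc (truncBelow k a : EReal) = a := by rw [coe_truncBelow ha, max_eq_left hka]
      _ < b - δ := hab
      _ ≤ truncBelow k b - δ := by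
        rw [coe_truncBelow hb]
        exact EReal.sub_le_sub (le_max_left _ _) le_rfl
  have hlt' : truncBelow k a < truncBelow k b - δ := mod_cast hlt
  linarith

end Truncation

section Convergence

variable {X ι : Type*} [MeasurableSpace X] {μ : Measure X} {l : Filter ι} {f : X → EReal}

theorem measure_lt_sub_le_add {g : X → EReal} (hf_top : ∀ x, f x ≠ ⊤) (k δ : ℝ) :
    μ {x | g x < f x - (δ : EReal)} ≤ μ {x | g x < ((-k : ℝ) : EReal)} +
      μ {x | δ ≤ ‖truncBelow k (g x) - truncBelow k (f x)‖} := by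
  refine (measure_mono fun x hx ↦ ?_).trans (measure_union_le _ _)
  refine (lt_or_ge (g x) ((-k : ℝ) : EReal)).imp_right fun hk ↦ ?_
  calc δ ≤ truncBelow k (f x) - truncBelow k (g x) :=
        (lt_truncBelow_sub_truncBelow (hf_top x) hk hx).le
    _ ≤ ‖truncBelow k (g x) - truncBelow k (f x)‖ := by
      rw [norm_sub_rev]
      exact Real.le_norm_self _

theorem tendsto_measure_lt_sub_of_tendstoInMeasure {g : ι → X → EReal} (hf_top : ∀ x, f x ≠ ⊤)
    (htrunc : ∀ k : ℝ, 0 < k →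
      TendstoInMeasure μ (fun j x ↦ truncBelow k (g j x)) l (fun x ↦ truncBelow k (f x)))
    (htail : Tendsto (fun k : ℝ ↦ limsup (fun j ↦ μ {x | g j x < ((-k : ℝ) : EReal)}) l)
      atTop (nhds 0))
    {δ : ℝ} (hδ : 0 < δ) :
    Tendsto (fun j ↦ μ {x | g j x < f x - (δ : EReal)}) l (nhds 0) := by
  rw [ENNReal.tendsto_nhds_zero]
  intro ε hε
  have hε2 : 0 < ε / 2 := ENNReal.half_pos hε.ne'
  obtain ⟨k, hk, hk0⟩ := ((htail.eventually_lt_const hε2).and (eventually_gt_atTop 0)).exists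
  have hdist := tendstoInMeasure_iff_norm.1 (htrunc k hk0) δ hδ
  filter_upwards [eventually_lt_of_limsup_lt hk, hdist.eventually_le_const hε2]
    with j hj_tail hj_dist
  calc μ {x | g j x < f x - (δ : EReal)}
      ≤ μ {x | g j x < ((-k : ℝ) : EReal)} +
          μ {x | δ ≤ ‖truncBelow k (g j x) - truncBelow k (f x)‖} :=
        measure_lt_sub_le_add hf_top k δ
    _ ≤ ε / 2 + ε / 2 := add_le_add hj_tail.le hj_dist
    _ = ε := ENNReal.add_halves ε

theorem tendstoInMeasure_of_tendsto_lintegral_abs_sub {u : ι → X → ℝ} {v : X → ℝ}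
    (hu : ∀ j, AEMeasurable (u j) μ) (hv : AEMeasurable v μ)
    (h : Tendsto (fun j ↦ ∫⁻ x, ENNReal.ofReal |u j x - v x| ∂μ) l (nhds 0)) :
    TendstoInMeasure μ u l v := by
  refine tendstoInMeasure_of_tendsto_eLpNorm one_ne_zero
    (fun j ↦ (hu j).aestronglyMeasurable) hv.aestronglyMeasurable ?_
  simpa only [eLpNorm_one_eq_lintegral_enorm, Pi.sub_apply, Real.enorm_eq_ofReal_abs] using h

end Convergence

theorem stmt_6_general {X ι : Type*} [MeasurableSpace X] {l : Filter ι}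
    (μ : Measure X) (ν : ι → Measure X) (hν : ∀ j, ν j ≤ μ)
    (fj : ι → X → EReal) (f : X → EReal)
    (hfj : ∀ j, AEMeasurable (fj j) μ) (hf : AEMeasurable f μ) (hf' : ∀ x, f x ≠ ⊤)
    (h1 : ∀ k : ℝ, 0 < k →
      Tendsto (fun j ↦ ∫⁻ x, ENNReal.ofReal |truncBelow k (fj j x) - truncBelow k (f x)| ∂μ)
        l (nhds 0))
    (h2 : Tendsto (fun k : ℝ ↦ limsup (fun j ↦ μ {x | fj j x < ((-k : ℝ) : EReal)}) l)
      atTop (nhds 0)) (δ : ℝ) (hδ : 0 < δ) :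
    Tendsto (fun j ↦ ν j {x | fj j x < f x - (δ : EReal)}) l (nhds 0) := by
  have htrunc (k : ℝ) (hk : 0 < k) :
      TendstoInMeasure μ (fun j x ↦ truncBelow k (fj j x)) l (fun x ↦ truncBelow k (f x)) :=
    tendstoInMeasure_of_tendsto_lintegral_abs_sub
      (fun j ↦ (measurable_truncBelow k).comp_aemeasurable (hfj j))
      ((measurable_truncBelow k).comp_aemeasurable hf) (h1 k hk)
  exact tendsto_of_tendsto_of_tendsto_of_le_of_le tendsto_const_nhds
    (tendsto_measure_lt_sub_of_tendstoInMeasure hf' htrunc h2 hδ)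
    (fun _ ↦ zero_le) (fun j ↦ hν j _)

/-- The conclusion established in the proof of ii) ⇒ iii) of Theorem 3.10:
if `ν_j ≤ μ` for all `j`, the truncations `max(f_j, −k)` converge to `max(f, −k)`
in `L¹(μ)` for every `k > 0`, and the tails `μ({f_j < −k})` (uniformly in `j`)
and `μ({f < −k})` go to `0` as `k → ∞`, then `ν_j({f_j < f − δ}) → 0` for
every `δ > 0`. -/
theorem stmt_6 {X : Type*} [MeasurableSpace X]
    (μ : Measure X) (ν : ℕ → Measure X) (hν : ∀ j, ν j ≤ μ)
    (fj : ℕ → X → EReal) (f : X → EReal)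
    (hfj : ∀ j, Measurable (fj j)) (hf : Measurable f)
    (hfj' : ∀ j x, fj j x ≠ ⊤) (hf' : ∀ x, f x ≠ ⊤)
    (h1 : ∀ k : ℝ, 0 < k →
      Tendsto (fun j => ∫⁻ x, ENNReal.ofReal
          |(max (fj j x) ((-k : ℝ) : EReal)).toReal -
            (max (f x) ((-k : ℝ) : EReal)).toReal| ∂μ) atTop (nhds 0))
    (h2 : Tendsto (fun k : ℝ => ⨆ j, μ {x | fj j x < ((-k : ℝ) : EReal)})
      atTop (nhds 0))
    (h3 : Tendsto (fun k : ℝ => μ {x | f x < ((-k : ℝ) : EReal)}) atTop (nhds 0)) :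
    ∀ δ : ℝ, 0 < δ →
      Tendsto (fun j => ν j {x | fj j x < f x - (δ : EReal)}) atTop (nhds 0) := by
  refine stmt_6_general μ ν hν fj f (fun j ↦ (hfj j).aemeasurable) hf.aemeasurable hf' h1 ?_
  exact tendsto_of_tendsto_of_tendsto_of_le_of_le tendsto_const_nhds h2
    (fun _ ↦ zero_le) (fun _ ↦ limsup_le_iSup)
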